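/- arXiv:1207.5295 — 3 statements merged into one kernel-verified Lean document; each statement's English description precedes it below -/
import Mathlib

section
/- Let A, B, D ∈ G(Z,C) and z* ∈ C⁻ \ {0}. Then (A −_{z*} D) ⊕ B ⊆ (A ⊕ B) −_{z*} D. The inclusion is strict if and only if either B = D = ∅, or B ⊕ H(z*) = D ⊕ H(z*) = Z and A ⊕ H(z*) ∉ {Z, ∅}. -/
open Set Topology Pointwise

noncomputable section

variable {X Z : Type*}

/-- The family `G(Z,C)` of subsets `A` with `A = cl co (A + C)`. -/
def Gset [AddCommGroup Z] [Module ℝ Z] [TopologicalSpace Z] (C : Set Z) : Set (Set Z) :=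
  {A | A = closure (convexHull ℝ (A + C))}

/-- `A ⊕ B = cl (A + B)` (Minkowski sum, with `A + ∅ = ∅`). -/
def oplus [AddCommGroup Z] [TopologicalSpace Z] (A B : Set Z) : Set Z :=
  closure (A + B)

/-- The homogeneous closed half-space `H(z*) = {z : z*(z) ≤ 0}`. -/
def Hset [TopologicalSpace Z] [AddCommGroup Z] [Module ℝ Z] (zs : Z →L[ℝ] ℝ) : Set Z :=
  {z | zs z ≤ 0}

/-- `A −_{z*} B = {z : B + z ⊆ A ⊕ H(z*)}`. -/
def resid [TopologicalSpace Z] [AddCommGroup Z] [Module ℝ Z]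
    (zs : Z →L[ℝ] ℝ) (A B : Set Z) : Set Z :=
  {z | ∀ b ∈ B, b + z ∈ oplus A (Hset zs)}

/-- Convexity of a set-valued function: `f(t x₁ + (1-t) x₂) ⊇ t f(x₁) ⊕ (1-t) f(x₂)`. -/
def ConvexSV [AddCommGroup X] [Module ℝ X] [TopologicalSpace Z] [AddCommGroup Z] [Module ℝ Z]
    (f : X → Set Z) : Prop :=
  ∀ x₁ x₂ : X, ∀ t : ℝ, 0 < t → t < 1 →
    oplus (t • f x₁) ((1 - t) • f x₂) ⊆ f (t • x₁ + (1 - t) • x₂)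

/-- Directional derivative `f'_{z*}(x₀, x) = ⋂_{s>0} cl ⋃_{0<t<s} (1/t)(f(x₀+tx) −_{z*} f(x₀))`. -/
def dirDer [AddCommGroup X] [Module ℝ X] [TopologicalSpace Z] [AddCommGroup Z] [Module ℝ Z]
    (zs : Z →L[ℝ] ℝ) (f : X → Set Z) (x₀ x : X) : Set Z :=
  ⋂ s ∈ Ioi (0:ℝ), closure (⋃ t ∈ Ioo (0:ℝ) s, (1 / t) • resid zs (f (x₀ + t • x)) (f x₀))

/-- `S_{(x*,z*)}(x) = {z : x*(x) + z*(z) ≤ 0}`. -/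
def Sfun [TopologicalSpace X] [AddCommGroup X] [Module ℝ X]
    [TopologicalSpace Z] [AddCommGroup Z] [Module ℝ Z]
    (xs : X →L[ℝ] ℝ) (zs : Z →L[ℝ] ℝ) (x : X) : Set Z :=
  {z | xs x + zs z ≤ 0}

/-- The `z*`-subdifferential of `f` at `x₀`. -/
def subdiff [TopologicalSpace X] [AddCommGroup X] [Module ℝ X]
    [TopologicalSpace Z] [AddCommGroup Z] [Module ℝ Z]
    (zs : Z →L[ℝ] ℝ) (f : X → Set Z) (x₀ : X) : Set (X →L[ℝ] ℝ) :=
  {xs | ∀ x : X, dirDer zs f x₀ x ⊆ Sfun xs zs x}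

/-- Scalarization `φ_{f,z*}(x) = inf{−z*(z) : z ∈ f(x)}` taking values in `EReal`. -/
def scalFn [TopologicalSpace Z] [AddCommGroup Z] [Module ℝ Z]
    (zs : Z →L[ℝ] ℝ) (f : X → Set Z) (x : X) : EReal :=
  ⨅ z ∈ f x, ((-(zs z) : ℝ) : EReal)

/-- Inf-residuation on `EReal`: `r −• s = inf {t ∈ ℝ : r ≤ s + t}`. -/
def eresid (r s : EReal) : EReal :=
  sInf {t : EReal | ∃ t' : ℝ, t = (t' : EReal) ∧ r ≤ s + (t' : EReal)}

/-- Scalar directional derivative `φ'_{f,z*}(x₀,x) = inf_{t>0} (1/t)(φ(x₀+tx) −• φ(x₀))`. -/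
def scalDer [AddCommGroup X] [Module ℝ X] [TopologicalSpace Z] [AddCommGroup Z] [Module ℝ Z]
    (zs : Z →L[ℝ] ℝ) (f : X → Set Z) (x₀ x : X) : EReal :=
  ⨅ t ∈ Ioi (0:ℝ), (((1 / t : ℝ) : EReal) * eresid (scalFn zs f (x₀ + t • x)) (scalFn zs f x₀))

/-- Inf-translation `f̂(x; M) = cl co ⋃_{m ∈ M} f(m + x)`. -/
def infTrans [AddCommGroup X] [TopologicalSpace Z] [AddCommGroup Z] [Module ℝ Z]
    (f : X → Set Z) (M : Set X) (x : X) : Set Z :=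
  closure (convexHull ℝ (⋃ m ∈ M, f (m + x)))

end

lemma aux_mem {Z : Type*} [AddCommGroup Z] [Module ℝ Z] [TopologicalSpace Z]
    [IsTopologicalAddGroup Z] [ContinuousSMul ℝ Z]
    (zs : Z →L[ℝ] ℝ) (e : Z) (he : zs e = 1) (S : Set Z) (z : Z) :
    z ∈ oplus S (Hset zs) ↔ ∀ ε : ℝ, 0 < ε → ∃ s ∈ S, zs z < zs s + ε := by
  unfold oplus Hset
  constructor
  · intro h ε hε
    have ho : IsOpen {w | zs z - ε < zs w} := isOpen_lt continuous_const zs.continuous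
    obtain ⟨w, hw, s, hs, t, ht, rfl⟩ := mem_closure_iff.1 h _ ho (by simp [hε])
    refine ⟨s, hs, ?_⟩
    simp only [mem_setOf_eq, map_add] at hw ht
    linarith
  · intro h
    have ht : Filter.Tendsto (fun ε : ℝ => z - ε • e) (𝓝[>] 0) (𝓝 z) := by
      have : Continuous (fun ε : ℝ => z - ε • e) := by fun_prop
      have h2 := this.tendsto 0
      simp only [zero_smul, sub_zero] at h2
      exact h2.mono_left nhdsWithin_le_nhds
    refine mem_closure_of_tendsto ht ?_
    filter_upwards [self_mem_nhdsWithin] with ε hε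
    obtain ⟨s, hs, h'⟩ := h ε hε
    refine ⟨s, hs, z - ε • e - s, ?_, by simp⟩
    simp only [mem_setOf_eq, map_sub, map_smul, he, smul_eq_mul, mul_one]
    linarith

lemma aux_resid {Z : Type*} [AddCommGroup Z] [Module ℝ Z] [TopologicalSpace Z]
    [IsTopologicalAddGroup Z] [ContinuousSMul ℝ Z]
    (zs : Z →L[ℝ] ℝ) (e : Z) (he : zs e = 1) (A D : Set Z) (z : Z) :
    z ∈ resid zs A D ↔ ∀ d ∈ D, ∀ ε : ℝ, 0 < ε → ∃ s ∈ A, zs d + zs z < zs s + ε := by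
  simp only [resid, mem_setOf_eq, aux_mem zs e he, map_add]

lemma aux_rhs {Z : Type*} [AddCommGroup Z] [Module ℝ Z] [TopologicalSpace Z]
    [IsTopologicalAddGroup Z] [ContinuousSMul ℝ Z]
    (zs : Z →L[ℝ] ℝ) (e : Z) (he : zs e = 1) (A B D : Set Z) (z : Z) :
    z ∈ resid zs (oplus A B) D ↔ ∀ d ∈ D, ∀ ε : ℝ, 0 < ε →
      ∃ a ∈ A, ∃ b ∈ B, zs d + zs z < zs a + zs b + ε := by
  rw [aux_resid zs e he]
  refine forall₂_congr fun d hd => ⟨fun h ε hε => ?_, fun h ε hε => ?_⟩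
  · obtain ⟨w, hw, h1⟩ := h ε hε
    have ho : IsOpen {w | zs d + zs z < zs w + ε} :=
      isOpen_lt continuous_const (zs.continuous.add continuous_const)
    obtain ⟨w, hw, a, ha, b, hb, rfl⟩ := mem_closure_iff.1 hw _ ho h1
    refine ⟨a, ha, b, hb, ?_⟩
    simpa only [mem_setOf_eq, map_add] using hw
  · obtain ⟨a, ha, b, hb, h1⟩ := h ε hε
    exact ⟨a + b, subset_closure (add_mem_add ha hb), by simpa only [map_add] using h1⟩

lemma aux_lhs {Z : Type*} [AddCommGroup Z] [Module ℝ Z] [TopologicalSpace Z]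
    [IsTopologicalAddGroup Z] [ContinuousSMul ℝ Z]
    (zs : Z →L[ℝ] ℝ) (e : Z) (he : zs e = 1) (A B D : Set Z) (z : Z) :
    z ∈ oplus (resid zs A D) B ↔ ∀ ε : ℝ, 0 < ε →
      ∃ r ∈ resid zs A D, ∃ b ∈ B, zs z < zs r + zs b + ε := by
  have key : resid zs A D + B = (resid zs A D + B) + Hset zs := by
    apply Subset.antisymm
    · intro x hx
      exact ⟨x, hx, 0, by simp [Hset], by simp⟩
    · rintro _ ⟨_, ⟨r, hr, b, hb, rfl⟩, t, ht, rfl⟩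
      refine ⟨r + t, ?_, b, hb, by simp only; abel⟩
      rw [aux_resid zs e he] at hr ⊢
      intro d hd ε hε
      obtain ⟨s, hs, h⟩ := hr d hd ε hε
      refine ⟨s, hs, ?_⟩
      simp only [Hset, mem_setOf_eq] at ht
      rw [map_add]; linarith
  have : oplus (resid zs A D) B = oplus (resid zs A D + B) (Hset zs) := by
    unfold oplus; rw [← key]
  rw [this, aux_mem zs e he]
  refine forall₂_congr fun ε hε => ⟨?_, ?_⟩
  · rintro ⟨_, ⟨r, hr, b, hb, rfl⟩, h⟩
    exact ⟨r, hr, b, hb, by simpa only [map_add] using h⟩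
  · rintro ⟨r, hr, b, hb, h⟩
    exact ⟨r + b, add_mem_add hr hb, by simpa only [map_add] using h⟩

lemma aux_univ {Z : Type*} [AddCommGroup Z] [Module ℝ Z] [TopologicalSpace Z]
    [IsTopologicalAddGroup Z] [ContinuousSMul ℝ Z]
    (zs : Z →L[ℝ] ℝ) (e : Z) (he : zs e = 1) (S : Set Z) :
    oplus S (Hset zs) = univ ↔ ∀ M : ℝ, ∃ s ∈ S, M < zs s := by
  rw [eq_univ_iff_forall]
  constructor
  · intro h M
    obtain ⟨s, hs, h1⟩ := (aux_mem zs e he S _).1 (h ((M + 1) • e)) 1 one_pos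
    simp only [map_smul, he, smul_eq_mul, mul_one] at h1
    exact ⟨s, hs, by linarith⟩
  · intro h z
    rw [aux_mem zs e he]
    intro ε hε
    obtain ⟨s, hs, h1⟩ := h (zs z)
    exact ⟨s, hs, by linarith⟩

lemma aux_empty {Z : Type*} [AddCommGroup Z] [Module ℝ Z] [TopologicalSpace Z]
    (zs : Z →L[ℝ] ℝ) (S : Set Z) :
    oplus S (Hset zs) ≠ ∅ ↔ S.Nonempty := by
  rw [← nonempty_iff_ne_empty, oplus, closure_nonempty_iff, add_nonempty]
  exact and_iff_left ⟨0, by simp [Hset]⟩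

theorem stmt5 {Z : Type*} [AddCommGroup Z] [Module ℝ Z] [TopologicalSpace Z]
    [IsTopologicalAddGroup Z] [ContinuousSMul ℝ Z] [LocallyConvexSpace ℝ Z]
    (C : Set Z) (hCconv : Convex ℝ C) (hC0 : (0:Z) ∈ C)
    (hCcone : ∀ t : ℝ, 0 < t → t • C ⊆ C) (hclC : closure C ≠ Set.univ)
    (zs : Z →L[ℝ] ℝ) (hzs : ∀ z ∈ C, zs z ≤ 0) (hzs0 : zs ≠ 0)
    (A B D : Set Z) (hA : A ∈ Gset C) (hB : B ∈ Gset C) (hD : D ∈ Gset C) :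
    oplus (resid zs A D) B ⊆ resid zs (oplus A B) D ∧
    (oplus (resid zs A D) B ⊂ resid zs (oplus A B) D ↔
      (B = ∅ ∧ D = ∅) ∨
        (oplus B (Hset zs) = Set.univ ∧ oplus D (Hset zs) = Set.univ ∧
          oplus A (Hset zs) ≠ Set.univ ∧ oplus A (Hset zs) ≠ ∅)) := by
  obtain ⟨e, he⟩ : ∃ e, zs e = 1 := by
    obtain ⟨v, hv⟩ : ∃ v, zs v ≠ 0 := by
      by_contra! h
      exact hzs0 (by ext v; simpa using h v)
    exact ⟨(zs v)⁻¹ • v, by simp [hv]⟩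
  have hsub : oplus (resid zs A D) B ⊆ resid zs (oplus A B) D := by
    intro z hz
    rw [aux_lhs zs e he] at hz
    rw [aux_rhs zs e he]
    intro d hd ε hε
    obtain ⟨r, hr, b, hb, h1⟩ := hz (ε / 2) (by linarith)
    obtain ⟨a, ha, h2⟩ := (aux_resid zs e he A D r).1 hr d hd (ε / 2) (by linarith)
    exact ⟨a, ha, b, hb, by linarith⟩
  refine ⟨hsub, ?_⟩
  rw [aux_empty, Ne, aux_univ zs e he, aux_univ zs e he, aux_univ zs e he]
  constructor
  · intro hss
    by_contra hP
    apply hss.2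
    intro z hz
    rw [aux_rhs zs e he] at hz
    rw [aux_lhs zs e he]
    intro ε hε
    rcases D.eq_empty_or_nonempty with hDe | ⟨d0, hd0⟩
    · rcases B.eq_empty_or_nonempty with hBe | ⟨b0, hb0⟩
      · exact absurd (Or.inl ⟨hBe, hDe⟩) hP
      · refine ⟨z - b0, ?_, b0, hb0, by simp [hε]⟩
        rw [aux_resid zs e he]
        intro d hd
        simp [hDe] at hd
    · obtain ⟨a0, ha0, b0, hb0, -⟩ := hz d0 hd0 1 one_pos
      by_cases hAu : ∀ M : ℝ, ∃ s ∈ A, M < zs s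
      · refine ⟨z - b0, ?_, b0, hb0, by simp [hε]⟩
        rw [aux_resid zs e he]
        intro d hd δ hδ
        obtain ⟨s, hs, h⟩ := hAu (zs d + zs (z - b0))
        exact ⟨s, hs, by linarith⟩
      · have hAu' := hAu
        push Not at hAu'
        obtain ⟨M, hM⟩ := hAu'
        by_cases hDu : ∀ M : ℝ, ∃ s ∈ D, M < zs s
        · have hBu : ¬ ∀ M : ℝ, ∃ s ∈ B, M < zs s :=
            fun hBu => hP (Or.inr ⟨hBu, hDu, hAu, ⟨a0, ha0⟩⟩)
          push Not at hBu
          obtain ⟨N, hN⟩ := hBu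
          obtain ⟨d, hd, h⟩ := hDu (M + N + 1 - zs z)
          obtain ⟨a, ha, b, hb, h2⟩ := hz d hd 1 one_pos
          have := hM a ha
          have := hN b hb
          linarith
        · push Not at hDu
          obtain ⟨N, hN⟩ := hDu
          have bA : BddAbove (zs '' A) := ⟨M, by rintro _ ⟨a, ha, rfl⟩; exact hM a ha⟩
          have bD : BddAbove (zs '' D) := ⟨N, by rintro _ ⟨a, ha, rfl⟩; exact hN a ha⟩
          obtain ⟨_, ⟨d, hd, rfl⟩, hd1⟩ :=
            exists_lt_of_lt_csSup (Set.Nonempty.image zs ⟨d0, hd0⟩)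
              (show sSup (zs '' D) - ε / 2 < sSup (zs '' D) by linarith)
          obtain ⟨a, ha, b, hb, h2⟩ := hz d hd (ε / 2) (by linarith)
          have h3 := le_csSup bA (mem_image_of_mem zs ha)
          have hv : zs ((sSup (zs '' A) - sSup (zs '' D)) • e)
              = sSup (zs '' A) - sSup (zs '' D) := by simp [he]
          refine ⟨(sSup (zs '' A) - sSup (zs '' D)) • e, ?_, b, hb, ?_⟩
          · rw [aux_resid zs e he]
            intro d' hd' δ hδ
            have h4 := le_csSup bD (mem_image_of_mem zs hd')
            obtain ⟨_, ⟨a', ha', rfl⟩, h5⟩ :=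
              exists_lt_of_lt_csSup (Set.Nonempty.image zs ⟨a0, ha0⟩)
                (show sSup (zs '' A) - δ < sSup (zs '' A) by linarith)
            refine ⟨a', ha', ?_⟩
            rw [hv]; linarith
          · rw [hv]; linarith
  · intro hP
    refine ⟨hsub, fun hcon => ?_⟩
    have h0 : (0 : Z) ∈ resid zs (oplus A B) D := by
      rw [aux_rhs zs e he]
      intro d hd ε hε
      rcases hP with ⟨-, hDe⟩ | ⟨hBu, hDu, hAu, ⟨a0, ha0⟩⟩
      · simp [hDe] at hd
      · obtain ⟨b, hb, h⟩ := hBu (zs d + zs 0 - zs a0)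
        exact ⟨a0, ha0, b, hb, by linarith⟩
    obtain ⟨r, hr, b, hb, -⟩ := (aux_lhs zs e he A B D 0).1 (hcon h0) 1 one_pos
    rcases hP with ⟨hBe, -⟩ | ⟨hBu, hDu, hAu, -⟩
    · simp [hBe] at hb
    · push Not at hAu
      obtain ⟨M, hM⟩ := hAu
      obtain ⟨d, hd, h⟩ := hDu (M + 1 - zs r)
      obtain ⟨a, ha, h2⟩ := (aux_resid zs e he A D r).1 hr d hd 1 one_pos
      have := hM a ha
      linarith
end

section
/- Let f : X → G(Z,C) be convex, x₀, x ∈ X, z* ∈ C⁻ \ {0}, and let g_{z*}(t, y) = (1/t)·(f(x₀ + t y) −_{z*} f(x₀)) for t > 0. If 0 < t ≤ s, then H(z*) −_{z*} g_{z*}(s, −x) ⊇ H(z*) −_{z*} g_{z*}(t, −x) and g_{z*}(t, x) ⊇ g_{z*}(s, x). If additionally f(x₀) ⊕ H(z*) ∉ {Z, ∅}, then H(z*) −_{z*} g_{z*}(t, −x) ⊇ g_{z*}(t, x) for every t > 0. -/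
open Set Topology Pointwise

theorem mem_oplus_H {Z : Type*} [AddCommGroup Z] [Module ℝ Z] [TopologicalSpace Z]
    [IsTopologicalAddGroup Z] [ContinuousSMul ℝ Z] (zs : Z →L[ℝ] ℝ) (hzs0 : zs ≠ 0)
    (A : Set Z) (z : Z) :
    z ∈ oplus A (Hset zs) ↔ ∀ ε : ℝ, 0 < ε → ∃ a ∈ A, zs z ≤ zs a + ε := by
  constructor
  · intro h ε hε
    have ho : IsOpen {w : Z | zs z - ε < zs w} := isOpen_lt continuous_const zs.continuous
    obtain ⟨w, hw, hw2⟩ := mem_closure_iff.1 h _ ho (by simpa using hε)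
    obtain ⟨a, ha, k, hk, rfl⟩ := hw2
    refine ⟨a, ha, ?_⟩
    have hk' : zs k ≤ 0 := hk
    have hw' : zs z - ε < zs (a + k) := hw
    rw [map_add] at hw'
    linarith
  · intro h
    obtain ⟨e0, he0⟩ : ∃ e, zs e ≠ 0 := by
      by_contra! hc
      exact hzs0 (ContinuousLinearMap.ext hc)
    obtain ⟨e, he⟩ : ∃ e, zs e = 1 := ⟨(zs e0)⁻¹ • e0, by simp [he0]⟩
    have hc : Continuous (fun r : ℝ => z - r • e) := by fun_prop
    have ht : Filter.Tendsto (fun r : ℝ => z - r • e) (𝓝[>] 0) (𝓝 z) := by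
      have := (hc.tendsto 0).mono_left (nhdsWithin_le_nhds (s := Ioi (0:ℝ)))
      simpa using this
    refine mem_closure_of_tendsto ht ?_
    filter_upwards [self_mem_nhdsWithin] with r hr
    obtain ⟨a, ha, hza⟩ := h r hr
    refine ⟨a, ha, z - r • e - a, ?_, by simp⟩
    change zs _ ≤ 0
    simp [he]
    linarith

theorem resid_mono {Z : Type*} [AddCommGroup Z] [Module ℝ Z] [TopologicalSpace Z]
    [IsTopologicalAddGroup Z] [ContinuousSMul ℝ Z] {X : Type*} [AddCommGroup X] [Module ℝ X]
    (zs : Z →L[ℝ] ℝ) (hzs0 : zs ≠ 0) (f : X → Set Z) (hf : ConvexSV f) (x₀ x : X)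
    (t s : ℝ) (ht : 0 < t) (hts : t ≤ s) :
    (1 / s) • resid zs (f (x₀ + s • x)) (f x₀) ⊆
          (1 / t) • resid zs (f (x₀ + t • x)) (f x₀) := by
  rcases hts.eq_or_lt with rfl | hlt
  · exact subset_rfl
  have hs : 0 < s := ht.trans hlt
  rintro _ ⟨z, hz, rfl⟩
  refine ⟨(t / s) • z, ?_, ?_⟩
  · intro b hb
    rw [mem_oplus_H zs hzs0]
    intro ε hε
    obtain ⟨a, ha, hab⟩ := (mem_oplus_H zs hzs0 _ _).1 (hz b hb) ε hε
    have hl0 : 0 < t / s := div_pos ht hs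
    have hl1 : t / s < 1 := (div_lt_one hs).2 hlt
    have hx : (t / s) • (x₀ + s • x) + (1 - t / s) • x₀ = x₀ + t • x := by
      have : t / s * s = t := by field_simp
      rw [smul_add, smul_smul, this, sub_smul, one_smul]
      abel
    have hmem := hf (x₀ + s • x) x₀ (t / s) hl0 hl1
      (subset_closure (add_mem_add (smul_mem_smul_set ha) (smul_mem_smul_set hb)))
    rw [hx] at hmem
    refine ⟨_, hmem, ?_⟩
    simp only [map_add, map_smul, smul_eq_mul] at hab ⊢
    nlinarith
  · simp only [smul_smul]
    congr 1
    field_simp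

theorem stmt8 {Z : Type*} [AddCommGroup Z] [Module ℝ Z] [TopologicalSpace Z]
    [IsTopologicalAddGroup Z] [ContinuousSMul ℝ Z] [LocallyConvexSpace ℝ Z]
    {X : Type*} [AddCommGroup X] [Module ℝ X] [TopologicalSpace X]
    [IsTopologicalAddGroup X] [ContinuousSMul ℝ X] [LocallyConvexSpace ℝ X]
    (C : Set Z) (hCconv : Convex ℝ C) (hC0 : (0:Z) ∈ C)
    (hCcone : ∀ t : ℝ, 0 < t → t • C ⊆ C) (hclC : closure C ≠ Set.univ)
    (zs : Z →L[ℝ] ℝ) (hzs : ∀ z ∈ C, zs z ≤ 0) (hzs0 : zs ≠ 0)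
    (f : X → Set Z) (hf : ConvexSV f) (hfG : ∀ x : X, f x ∈ Gset C)
    (x₀ x : X) :
    (∀ t s : ℝ, 0 < t → t ≤ s →
      resid zs (Hset zs) ((1 / t) • resid zs (f (x₀ + t • (-x))) (f x₀)) ⊆
          resid zs (Hset zs) ((1 / s) • resid zs (f (x₀ + s • (-x))) (f x₀)) ∧
        (1 / s) • resid zs (f (x₀ + s • x)) (f x₀) ⊆
          (1 / t) • resid zs (f (x₀ + t • x)) (f x₀)) ∧
    ((oplus (f x₀) (Hset zs) ≠ Set.univ ∧ oplus (f x₀) (Hset zs) ≠ ∅) →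
      ∀ t : ℝ, 0 < t →
        (1 / t) • resid zs (f (x₀ + t • x)) (f x₀) ⊆
          resid zs (Hset zs) ((1 / t) • resid zs (f (x₀ + t • (-x))) (f x₀))) := by
  refine ⟨fun t s ht hts => ⟨?_, resid_mono zs hzs0 f hf x₀ x t s ht hts⟩, ?_⟩
  · intro z hz b hb
    exact hz b (resid_mono zs hzs0 f hf x₀ (-x) t s ht hts hb)
  · rintro ⟨hu, hne⟩ t ht
    rintro _ ⟨u, hu', rfl⟩ _ ⟨v, hv, rfl⟩
    have hne' : (f x₀).Nonempty := by
      by_contra hc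
      rw [not_nonempty_iff_eq_empty] at hc
      exact hne (by simp [hc, oplus])
    have hbdd : BddAbove (zs '' f x₀) := by
      obtain ⟨z, hz⟩ := (ne_univ_iff_exists_notMem _).1 hu
      rw [mem_oplus_H zs hzs0] at hz
      push Not at hz
      obtain ⟨ε, hε, h⟩ := hz
      refine ⟨zs z, ?_⟩
      rintro _ ⟨a, ha, rfl⟩
      have := h a ha
      linarith
    have key : zs u + zs v ≤ 0 := by
      refine le_of_forall_pos_le_add fun ε hε => ?_
      obtain ⟨_, ⟨b, hb, rfl⟩, hbs⟩ := exists_lt_of_lt_csSup (hne'.image zs)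
        (show sSup (zs '' f x₀) - ε / 4 < sSup (zs '' f x₀) by linarith)
      obtain ⟨a, ha, hab⟩ := (mem_oplus_H zs hzs0 _ _).1 (hu' b hb) (ε / 4) (by linarith)
      obtain ⟨c, hc, hcb⟩ := (mem_oplus_H zs hzs0 _ _).1 (hv b hb) (ε / 4) (by linarith)
      have hmem := hf (x₀ + t • x) (x₀ + t • (-x)) (1 / 2) (by norm_num) (by norm_num)
        (subset_closure (add_mem_add (smul_mem_smul_set ha) (smul_mem_smul_set hc)))
      have hx : (1 / 2 : ℝ) • (x₀ + t • x) + (1 - 1 / 2 : ℝ) • (x₀ + t • (-x)) = x₀ := by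
        module
      rw [hx] at hmem
      have := le_csSup hbdd (mem_image_of_mem zs hmem)
      simp only [map_add, map_smul, smul_eq_mul] at hab hcb this
      linarith
    rw [mem_oplus_H zs hzs0]
    intro ε hε
    refine ⟨0, by simp [Hset], ?_⟩
    simp only [map_add, map_smul, smul_eq_mul, map_zero]
    have : 1 / t * (zs u + zs v) ≤ 0 := mul_nonpos_of_nonneg_of_nonpos (by positivity) key
    linarith
end

section
/- Let f : X → G(Z,C) be convex, x₀ ∈ X and z* ∈ C⁻ \ {0}. Then ∂_{z*} f(x₀) = ∂ φ_{f,z*}(x₀), where ∂ φ_{f,z*}(x₀) = {x* ∈ X* : x*(x) ≤ φ'_{f,z*}(x₀, x) for all x ∈ X} and φ'_{f,z*}(x₀, x) = inf_{t>0} (1/t)·(φ_{f,z*}(x₀ + t x) −• φ_{f,z*}(x₀)) with the inf-residuation r −• s = inf{t ∈ ℝ : r ≤ s +• t} on ℝ ∪ {±∞} (inf-addition convention: (+∞) +• (−∞) = +∞). -/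
open Set Topology Pointwise

section Helpers
variable {Z : Type*} [AddCommGroup Z] [Module ℝ Z] [TopologicalSpace Z]

theorem aux_scal_le {X : Type*} (zs : Z →L[ℝ] ℝ) (f : X → Set Z) (x : X) (c ε : ℝ) (hε : 0 < ε)
    (h : scalFn zs f x ≤ (c : EReal)) : ∃ a ∈ f x, -(zs a) < c + ε := by
  have h1 : scalFn zs f x < ((c + ε : ℝ) : EReal) :=
    lt_of_le_of_lt h (EReal.coe_lt_coe_iff.2 (by linarith))
  unfold scalFn at h1
  simp only [iInf_lt_iff] at h1
  obtain ⟨a, ha, h2⟩ := h1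
  exact ⟨a, ha, EReal.coe_lt_coe_iff.1 h2⟩

theorem aux_scal_of {X : Type*} (zs : Z →L[ℝ] ℝ) (f : X → Set Z) (x : X) (a : Z) (ha : a ∈ f x) :
    scalFn zs f x ≤ ((-(zs a) : ℝ) : EReal) := iInf₂_le a ha

theorem aux_le_of {X : Type*} (zs : Z →L[ℝ] ℝ) (f : X → Set Z) (x : X) (c : ℝ)
    (h : ∀ ε : ℝ, 0 < ε → ∃ a ∈ f x, -(zs a) < c + ε) : scalFn zs f x ≤ (c : EReal) := by
  refine EReal.le_of_forall_lt_iff_le.1 ?_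
  intro y hy
  have hy' : c < y := EReal.coe_lt_coe_iff.1 hy
  obtain ⟨a, ha, h2⟩ := h (y - c) (by linarith)
  exact (aux_scal_of zs f x a ha).trans (EReal.coe_le_coe_iff.2 (by linarith))

theorem aux_surj (zs : Z →L[ℝ] ℝ) (hzs0 : zs ≠ 0) (r : ℝ) : ∃ z, zs z = r := by
  obtain ⟨e, he⟩ : ∃ e, zs e ≠ 0 := by
    by_contra! h
    exact hzs0 (ContinuousLinearMap.ext h)
  exact ⟨(r / zs e) • e, by simp [he]⟩

theorem aux_oplus [IsTopologicalAddGroup Z] [ContinuousSMul ℝ Z]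
    {X : Type*} (zs : Z →L[ℝ] ℝ) (hzs0 : zs ≠ 0) (f : X → Set Z) (x : X) (w : Z) :
    w ∈ oplus (f x) (Hset zs) ↔ scalFn zs f x ≤ ((-(zs w) : ℝ) : EReal) := by
  constructor
  · intro hw
    have hcl : IsClosed {w : Z | scalFn zs f x ≤ ((-(zs w) : ℝ) : EReal)} :=
      isClosed_le continuous_const (continuous_coe_real_ereal.comp zs.continuous.neg)
    refine closure_minimal ?_ hcl hw
    rintro _ ⟨a, ha, b, hb, rfl⟩
    have hb' : zs b ≤ 0 := hb
    refine (aux_scal_of zs f x a ha).trans (EReal.coe_le_coe_iff.2 ?_)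
    simp only [map_add]
    linarith
  · intro h
    obtain ⟨e, he⟩ := aux_surj zs hzs0 1
    have ht : Filter.Tendsto (fun ε : ℝ => w - ε • e) (𝓝[>] 0) (𝓝 w) := by
      have : Continuous (fun ε : ℝ => w - ε • e) := by fun_prop
      have h2 := this.tendsto 0
      simp only [zero_smul, sub_zero] at h2
      exact h2.mono_left nhdsWithin_le_nhds
    refine mem_closure_of_tendsto ht ?_
    filter_upwards [self_mem_nhdsWithin] with ε hε
    obtain ⟨a, ha, h2⟩ := aux_scal_le zs f x _ ε hε h
    refine ⟨a, ha, w - ε • e - a, ?_, by simp⟩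
    change zs (w - ε • e - a) ≤ 0
    simp only [map_sub, map_smul, he, smul_eq_mul]
    linarith

theorem aux_resid_s14 [IsTopologicalAddGroup Z] [ContinuousSMul ℝ Z]
    {X : Type*} (zs : Z →L[ℝ] ℝ) (hzs0 : zs ≠ 0) (f : X → Set Z) (x y : X) (z : Z) :
    z ∈ resid zs (f x) (f y) ↔
      ∀ b ∈ f y, scalFn zs f x ≤ ((-(zs b) + -(zs z) : ℝ) : EReal) := by
  refine forall₂_congr fun b _ => ?_
  rw [aux_oplus zs hzs0, map_add, neg_add]

theorem aux_le_add {X : Type*} (zs : Z →L[ℝ] ℝ) (f : X → Set Z) (x y : X) (r : ℝ) :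
    scalFn zs f x ≤ scalFn zs f y + (r : EReal) ↔
      ∀ b ∈ f y, scalFn zs f x ≤ ((-(zs b) + r : ℝ) : EReal) := by
  constructor
  · intro h b hb
    refine h.trans ?_
    rw [EReal.coe_add]
    exact add_le_add_left (aux_scal_of zs f y b hb) _
  · intro h
    rw [← EReal.sub_le_iff_le_add (Or.inl (EReal.coe_ne_bot r)) (Or.inl (EReal.coe_ne_top r))]
    refine le_iInf₂ fun b hb => ?_
    rw [EReal.sub_le_iff_le_add (Or.inl (EReal.coe_ne_bot r)) (Or.inl (EReal.coe_ne_top r)),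
      ← EReal.coe_add]
    exact h b hb

end Helpers

theorem stmt14 {Z : Type*} [AddCommGroup Z] [Module ℝ Z] [TopologicalSpace Z]
    [IsTopologicalAddGroup Z] [ContinuousSMul ℝ Z] [LocallyConvexSpace ℝ Z]
    {X : Type*} [AddCommGroup X] [Module ℝ X] [TopologicalSpace X]
    [IsTopologicalAddGroup X] [ContinuousSMul ℝ X] [LocallyConvexSpace ℝ X]
    (C : Set Z) (hCconv : Convex ℝ C) (hC0 : (0:Z) ∈ C)
    (hCcone : ∀ t : ℝ, 0 < t → t • C ⊆ C) (hclC : closure C ≠ Set.univ)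
    (zs : Z →L[ℝ] ℝ) (hzs : ∀ z ∈ C, zs z ≤ 0) (hzs0 : zs ≠ 0)
    (f : X → Set Z) (hf : ConvexSV f) (hfG : ∀ x : X, f x ∈ Gset C)
    (x₀ : X) :
    subdiff zs f x₀ =
      {xs : X →L[ℝ] ℝ | ∀ x : X, ((xs x : ℝ) : EReal) ≤ scalDer zs f x₀ x} := by
  ext xs
  simp only [subdiff, mem_setOf_eq]
  refine forall_congr' fun x => ?_
  constructor
  · intro hsub
    refine le_iInf₂ fun t ht => ?_
    have ht : 0 < t := ht
    have key : ((t * xs x : ℝ) : EReal) ≤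
        eresid (scalFn zs f (x₀ + t • x)) (scalFn zs f x₀) := by
      refine le_sInf ?_
      rintro _ ⟨r, rfl, hr⟩
      rw [aux_le_add] at hr
      obtain ⟨z, hz⟩ := aux_surj zs hzs0 (-(r / t))
      have hz' : z ∈ dirDer zs f x₀ x := by
        refine mem_iInter₂.2 fun s hs => subset_closure ?_
        have hs : 0 < s := hs
        obtain ⟨τ, hτ0, hτ⟩ := exists_between (lt_min hs ht)
        have hτs := hτ.trans_le (min_le_left _ _)
        have hτt := hτ.trans_le (min_le_right _ _)
        refine mem_iUnion₂.2 ⟨τ, ⟨hτ0, hτs⟩, τ • z, ?_, ?_⟩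
        · rw [aux_resid_s14 zs hzs0]
          intro b hb
          have hl0 : 0 < τ / t := div_pos hτ0 ht
          have hl1 : τ / t < 1 := (div_lt_one ht).2 hτt
          apply aux_le_of
          intro ε hε
          obtain ⟨a, ha, hab⟩ := aux_scal_le zs f _ _ ε hε (hr b hb)
          refine ⟨(τ / t) • a + (1 - τ / t) • b, ?_, ?_⟩
          · have h1 := hf (x₀ + t • x) x₀ (τ / t) hl0 hl1
              (subset_closure (add_mem_add (smul_mem_smul_set ha) (smul_mem_smul_set hb)))
            have h2 : (τ / t) • (x₀ + t • x) + (1 - τ / t) • x₀ = x₀ + τ • x := by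
              rw [smul_add, smul_smul, div_mul_cancel₀ _ ht.ne', sub_smul, one_smul]
              abel
            rwa [h2] at h1
          · simp only [map_add, map_smul, smul_eq_mul, hz]
            have h3 : τ * -(r / t) = -(τ / t * r) := by ring
            rw [h3]
            nlinarith [mul_lt_mul_of_pos_left hab hl0, mul_lt_mul_of_pos_right hl1 hε]
        · simp only [smul_smul]
          rw [one_div_mul_cancel hτ0.ne', one_smul]
      have h4 : xs x + zs z ≤ 0 := hsub hz'
      rw [hz] at h4
      refine EReal.coe_le_coe_iff.2 ?_
      have h5 : xs x ≤ r / t := by linarith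
      rw [le_div_iff₀ ht] at h5
      linarith
    have h6 := mul_le_mul_of_nonneg_left key
      (EReal.coe_nonneg.2 (one_div_pos.2 ht).le)
    rwa [← EReal.coe_mul, ← mul_assoc, one_div_mul_cancel ht.ne', one_mul] at h6
  · intro h z hz
    have hcl : IsClosed (Sfun xs zs x) :=
      isClosed_le (continuous_const.add zs.continuous) continuous_const
    refine closure_minimal ?_ hcl (mem_iInter₂.1 hz 1 (mem_Ioi.2 one_pos))
    refine iUnion₂_subset fun t ht => ?_
    rintro _ ⟨w, hw, rfl⟩
    rw [aux_resid_s14 zs hzs0, ← aux_le_add] at hw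
    have ht0 : 0 < t := ht.1
    have h1 : ((xs x : ℝ) : EReal) ≤ ((1 / t : ℝ) : EReal) * ((-(zs w) : ℝ) : EReal) :=
      (h.trans (iInf₂_le t ht0)).trans
        (mul_le_mul_of_nonneg_left (sInf_le ⟨_, rfl, hw⟩)
          (EReal.coe_nonneg.2 (one_div_pos.2 ht0).le))
    rw [← EReal.coe_mul, EReal.coe_le_coe_iff] at h1
    change xs x + zs ((1 / t) • w) ≤ 0
    rw [map_smul, smul_eq_mul]
    linarith
end
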